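/- Let n ≥ 1 and let f : [0, ∞) → ℝ be a continuous (n+1)-concave function with f(0) ≥ 0 and f(t) > 0 for all t > 0. Define g by g(t) = t / f(t) for t > 0 and g(0) = 0. Then for every pair of Hermitian positive semidefinite matrices A, B ∈ M_n(ℂ): Tr(A) + Tr(B) − Tr(|A − B|) ≤ 2 Tr(f(A)^{1/2} g(B) f(A)^{1/2}). -/

import Mathlib

open Matrix
open scoped ComplexOrder

/-- A real function `h` is `n`-concave on a set `I ⊆ ℝ` if for all Hermitian `n × n`
complex matrices `A, B` with spectrum (i.e. all eigenvalues) in `I` and all `λ ∈ [0,1]`,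
`h(λA + (1−λ)B) ≥ λ h(A) + (1−λ) h(B)` in the Loewner order, where `h` is applied via
the continuous functional calculus `cfc`. -/
def NConcaveOn (n : ℕ) (h : ℝ → ℝ) (I : Set ℝ) : Prop :=
  ∀ A B : Matrix (Fin n) (Fin n) ℂ, A.IsHermitian → B.IsHermitian →
    spectrum ℝ A ⊆ I → spectrum ℝ B ⊆ I →
    ∀ l : ℝ, l ∈ Set.Icc (0 : ℝ) 1 →
      (cfc h (l • A + (1 - l) • B) - (l • cfc h A + (1 - l) • cfc h B)).PosSemidef

/-!
The heart of the matter is that `f` and `g = t / f` are both `n`-monotone on `[0, ∞)`.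
For `f` this is the classical fact that a nonnegative concave function on a half-line increases.
For `g` it suffices to compare `A = R Rᴴ` with its rank-one perturbation `A + v vᴴ = T Tᴴ`, where
`T = [R | v]` has `n + 1` columns. Since `g(T Tᴴ) = T f(Tᴴ T)⁻¹ Tᴴ`, the claim is an inverted form
of Jensen's inequality for the compression of the `(n + 1) × (n + 1)` matrix `Tᴴ T` to its first
`n` coordinates, which is where `(n + 1)`-concavity enters.

Put `D = B + (A - B)⁺`, a common upper bound of `A` and `B`. As `f(X) g(X) = X`, monotonicity gives
`Tr A + Tr B - Tr D ≤ Tr f(A) g(B)`, and `2 Tr D = Tr A + Tr B + Tr |A - B|`.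
-/

section MatrixFunctionalCalculus

open scoped MatrixOrder

variable {𝕜 : Type*} [RCLike 𝕜] {m k : Type*}

theorem conjTranspose_mul_mul_mono [Fintype m] [Finite k] {X Y : Matrix m m 𝕜} (hXY : X ≤ Y)
    (S : Matrix m k 𝕜) : Sᴴ * X * S ≤ Sᴴ * Y * S := by
  rw [Matrix.le_iff, ← Matrix.sub_mul, ← Matrix.mul_sub]
  exact (Matrix.le_iff.mp hXY).conjTranspose_mul_mul_same S

theorem trace_mul_nonneg [Fintype m] {X Y : Matrix m m 𝕜} (hX : 0 ≤ X) (hY : 0 ≤ Y) :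
    0 ≤ (X * Y).trace := by
  classical
  obtain ⟨R, rfl⟩ := CStarAlgebra.nonneg_iff_eq_star_mul_self.mp hX
  rw [Matrix.mul_assoc, Matrix.trace_mul_comm]
  exact (hY.posSemidef.mul_mul_conjTranspose_same R).trace_nonneg

open scoped Matrix.Norms.L2Operator in
theorem le_of_forall_one_sub_smul_le [Finite m] {X Y : Matrix m m ℂ}
    (hXY : ∀ l ∈ Set.Ioc (0 : ℝ) 1, (1 - l) • X ≤ Y) : X ≤ Y := by
  classical
  have := Fintype.ofFinite m
  have h_lim : Filter.Tendsto (fun l : ℝ => (1 - l) • X) (nhdsWithin 0 (Set.Ioi 0)) (nhds X) := by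
    have h_cont : Continuous fun l : ℝ => (1 - l) • X := by fun_prop
    simpa using (h_cont.tendsto 0).mono_left nhdsWithin_le_nhds
  exact le_of_tendsto h_lim
    (Filter.eventually_of_mem (Ioc_mem_nhdsGT zero_lt_one) hXY)

theorem conjTranspose_submatrix_one_mul_self [Fintype m] [DecidableEq m] [DecidableEq k] {e : k → m}
    (he : Function.Injective e) :
    ((1 : Matrix m m 𝕜).submatrix id e)ᴴ * (1 : Matrix m m 𝕜).submatrix id e = 1 := by
  rw [conjTranspose_submatrix, conjTranspose_one,
    ← submatrix_mul _ _ e id e Function.bijective_id, Matrix.one_mul, submatrix_one e he]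

variable [Fintype m] [DecidableEq m] [Fintype k] [DecidableEq k]

theorem continuousOn_real_spectrum (X : Matrix m m 𝕜) (h : ℝ → ℝ) :
    ContinuousOn h (spectrum ℝ X) :=
  X.finite_real_spectrum.continuousOn h

theorem cfc_mul_matrix (X : Matrix m m 𝕜) (h₁ h₂ : ℝ → ℝ) :
    cfc (fun t => h₁ t * h₂ t) X = cfc h₁ X * cfc h₂ X :=
  cfc_mul h₁ h₂ X (continuousOn_real_spectrum X h₁) (continuousOn_real_spectrum X h₂)

theorem isHermitian_cfc (X : Matrix m m 𝕜) (h : ℝ → ℝ) : (cfc h X).IsHermitian :=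
  cfc_predicate h X

theorem nonneg_iff_isHermitian_and_spectrum_subset_Ici {X : Matrix m m 𝕜} :
    0 ≤ X ↔ X.IsHermitian ∧ spectrum ℝ X ⊆ Set.Ici 0 :=
  ⟨fun hX => ⟨hX.posSemidef.1, fun _ ht => spectrum_nonneg_of_nonneg hX ht⟩,
    fun hX => (StarOrderedRing.nonneg_iff_spectrum_nonneg (R := ℝ) X hX.1).mpr hX.2⟩

theorem cfc_nonneg_of_nonneg {h : ℝ → ℝ} (hh : ∀ t ∈ Set.Ici (0 : ℝ), 0 ≤ h t)
    {X : Matrix m m 𝕜} (hX : 0 ≤ X) : 0 ≤ cfc h X :=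
  cfc_nonneg fun t ht => hh t (spectrum_nonneg_of_nonneg hX ht)

theorem aeval_mul_eq_mul_aeval {R S : Type*} [CommSemiring R] [Semiring S] [Algebra R S]
    {X : Matrix m m S} {Y : Matrix k k S} {W : Matrix m k S} (hW : X * W = W * Y)
    (p : Polynomial R) : Polynomial.aeval X p * W = W * Polynomial.aeval Y p := by
  have pow_mul_eq (j : ℕ) : X ^ j * W = W * Y ^ j := by
    induction j with
    | zero => rw [pow_zero, pow_zero, Matrix.one_mul, Matrix.mul_one]
    | succ j ih =>
      rw [pow_succ, pow_succ', Matrix.mul_assoc, hW, ← Matrix.mul_assoc, ih, Matrix.mul_assoc,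
        pow_mul_comm']
  induction p using Polynomial.induction_on' with
  | add p q hp hq => simp only [map_add, Matrix.add_mul, Matrix.mul_add, hp, hq]
  | monomial j a =>
    simp only [Polynomial.aeval_monomial, Algebra.algebraMap_eq_smul_one, Matrix.smul_mul,
      one_mul, Matrix.mul_smul, pow_mul_eq]

theorem cfc_mul_eq_mul_cfc {X : Matrix m m 𝕜} {Y : Matrix k k 𝕜} (hX : X.IsHermitian)
    (hY : Y.IsHermitian) {W : Matrix m k 𝕜} (hW : X * W = W * Y) (h : ℝ → ℝ) :
    cfc h X * W = W * cfc h Y := by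
  have : Finite ↥(spectrum ℝ X ∪ spectrum ℝ Y) :=
    (X.finite_real_spectrum.union Y.finite_real_spectrum).to_subtype
  obtain ⟨p, hp⟩ := (Polynomial.exists_eval_eq_iff
    (fun t : ↥(spectrum ℝ X ∪ spectrum ℝ Y) => (t : ℝ)) fun t => h t).mpr
      fun _ _ hst => congrArg h hst
  have hXp : cfc h X = Polynomial.aeval X p := by
    rw [← cfc_polynomial p X hX]
    exact cfc_congr fun t ht => (hp ⟨t, .inl ht⟩).symm
  have hYp : cfc h Y = Polynomial.aeval Y p := by
    rw [← cfc_polynomial p Y hY]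
    exact cfc_congr fun t ht => (hp ⟨t, .inr ht⟩).symm
  rw [hXp, hYp, aeval_mul_eq_mul_aeval hW]

theorem conjTranspose_mul_cfc_mul_of_isometry {X : Matrix m m 𝕜} {Y : Matrix k k 𝕜}
    (hX : X.IsHermitian) (hY : Y.IsHermitian) {S : Matrix m k 𝕜} (hS : Sᴴ * S = 1)
    (hXS : X * S = S * Y) (h : ℝ → ℝ) : Sᴴ * cfc h X * S = cfc h Y := by
  rw [Matrix.mul_assoc, cfc_mul_eq_mul_cfc hX hY hXS, ← Matrix.mul_assoc, hS, Matrix.one_mul]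

theorem cfc_mul_conjTranspose_self (T : Matrix m k 𝕜) (h : ℝ → ℝ) :
    cfc (fun t => h t * t) (T * Tᴴ) = T * cfc h (Tᴴ * T) * Tᴴ := by
  have hTT : (T * Tᴴ).IsHermitian := isHermitian_mul_conjTranspose_self T
  rw [cfc_mul_matrix, cfc_id' ℝ (T * Tᴴ) hTT.isSelfAdjoint, ← Matrix.mul_assoc,
    cfc_mul_eq_mul_cfc hTT (isHermitian_conjTranspose_mul_self T) (Matrix.mul_assoc T Tᴴ T)]

theorem cfc_abs_add_self {X : Matrix m m 𝕜} (hX : X.IsHermitian) :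
    cfc (fun t : ℝ => |t|) X + X = 2 • X⁺ := by
  rw [← CFC.abs_add_self X hX, CFC.abs_eq_cfc_norm X hX]
  rfl

end MatrixFunctionalCalculus

section ConcaveAndMonotone

open scoped MatrixOrder

/-- A real function `h` is `n`-monotone on a set `I ⊆ ℝ` if it preserves the Loewner order between
Hermitian `n × n` complex matrices with spectrum in `I`. -/
def NMonotoneOn (n : ℕ) (h : ℝ → ℝ) (I : Set ℝ) : Prop :=
  ∀ A B : Matrix (Fin n) (Fin n) ℂ, A.IsHermitian → B.IsHermitian →
    spectrum ℝ A ⊆ I → spectrum ℝ B ⊆ I → A ≤ B → cfc h A ≤ cfc h B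

theorem NMonotoneOn.cfc_le_cfc {n : ℕ} {h : ℝ → ℝ} (hh : NMonotoneOn n h (Set.Ici 0))
    {A B : Matrix (Fin n) (Fin n) ℂ} (hA : 0 ≤ A) (hAB : A ≤ B) : cfc h A ≤ cfc h B := by
  obtain ⟨hAh, hAs⟩ := nonneg_iff_isHermitian_and_spectrum_subset_Ici.mp hA
  obtain ⟨hBh, hBs⟩ := nonneg_iff_isHermitian_and_spectrum_subset_Ici.mp (hA.trans hAB)
  exact hh A B hAh hBh hAs hBs hAB

namespace NConcaveOn

variable {n : ℕ} {h : ℝ → ℝ}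

theorem le_cfc_average_conj {I : Set ℝ} (hh : NConcaveOn n h I) {X U : Matrix (Fin n) (Fin n) ℂ}
    (hX : X.IsHermitian) (hXI : spectrum ℝ X ⊆ I) (hU : U ∈ unitary (Matrix (Fin n) (Fin n) ℂ)) :
    (1 / 2 : ℝ) • (cfc h X + Uᴴ * cfc h X * U) ≤ cfc h ((1 / 2 : ℝ) • (X + Uᴴ * X * U)) := by
  have hUU : Uᴴ * U = 1 := (Unitary.mem_iff.mp hU).1
  have hUXU : (Uᴴ * X * U).IsHermitian := isHermitian_conjTranspose_mul_mul U hX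
  have hspec : spectrum ℝ (Uᴴ * X * U) = spectrum ℝ X :=
    Unitary.spectrum_star_left_conjugate (U := ⟨U, hU⟩)
  have hXU : X * U = U * (Uᴴ * X * U) := by
    rw [Matrix.mul_assoc Uᴴ, ← Matrix.mul_assoc U, show U * Uᴴ = 1 from
      (Unitary.mem_iff.mp hU).2, Matrix.one_mul]
  rw [conjTranspose_mul_cfc_mul_of_isometry hX hUXU hUU hXU, Matrix.le_iff]
  have hmid := hh X (Uᴴ * X * U) hX hUXU hXI (hspec ▸ hXI) (1 / 2) (by norm_num)
  rwa [show (1 - 1 / 2 : ℝ) = 1 / 2 by norm_num, ← smul_add, ← smul_add] at hmid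

-- Averaging `X` with its conjugate by the reflection `2 S Sᴴ - 1` kills the off-diagonal blocks, so
-- the average restricts to the range of `S` as the compression `Sᴴ X S`.
theorem conjTranspose_mul_cfc_mul_le {I : Set ℝ} (hh : NConcaveOn n h I) {k : Type*} [Fintype k]
    [DecidableEq k] {X : Matrix (Fin n) (Fin n) ℂ} (hX : X.IsHermitian) (hXI : spectrum ℝ X ⊆ I)
    {S : Matrix (Fin n) k ℂ} (hS : Sᴴ * S = 1) : Sᴴ * cfc h X * S ≤ cfc h (Sᴴ * X * S) := by
  have hP : IsStarProjection (S * Sᴴ) :=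
    ⟨by rw [IsIdempotentElem, Matrix.mul_assoc, ← Matrix.mul_assoc Sᴴ, hS, Matrix.one_mul],
      isHermitian_mul_conjTranspose_self S⟩
  set U : Matrix (Fin n) (Fin n) ℂ := 2 * (S * Sᴴ) - 1 with hU
  have hU_star : Uᴴ = U := by
    simp only [hU, two_mul, conjTranspose_sub, conjTranspose_add, conjTranspose_mul,
      conjTranspose_conjTranspose, conjTranspose_one]
  have hUS : U * S = S := by
    rw [hU, two_mul, Matrix.sub_mul, Matrix.add_mul, Matrix.mul_assoc, hS, Matrix.mul_one,
      Matrix.one_mul, add_sub_cancel_right]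
  have hSU : Sᴴ * U = Sᴴ := by
    simpa only [conjTranspose_mul, hU_star] using congrArg conjTranspose hUS
  have hYS : ((1 / 2 : ℝ) • (X + Uᴴ * X * U)) * S = S * (Sᴴ * X * S) := by
    rw [hU_star, smul_mul, Matrix.add_mul, Matrix.mul_assoc _ U, hUS, hU, two_mul]
    simp only [Matrix.sub_mul, Matrix.add_mul, Matrix.one_mul, Matrix.mul_assoc]
    module
  have hY : ((1 / 2 : ℝ) • (X + Uᴴ * X * U)).IsHermitian :=
    (hX.add (isHermitian_conjTranspose_mul_mul U hX)).smul (.all _)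
  calc Sᴴ * cfc h X * S
      = Sᴴ * ((1 / 2 : ℝ) • (cfc h X + Uᴴ * cfc h X * U)) * S := by
        rw [hU_star, Matrix.mul_smul, smul_mul, Matrix.mul_add, Matrix.add_mul, ← Matrix.mul_assoc,
          ← Matrix.mul_assoc, hSU, Matrix.mul_assoc _ U, hUS]
        module
    _ ≤ Sᴴ * cfc h ((1 / 2 : ℝ) • (X + Uᴴ * X * U)) * S :=
        conjTranspose_mul_mul_mono
          (hh.le_cfc_average_conj hX hXI hP.two_mul_sub_one_mem_unitary) S
    _ = cfc h (Sᴴ * X * S) :=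
        conjTranspose_mul_cfc_mul_of_isometry hY (isHermitian_conjTranspose_mul_mul S hX) hS hYS h

theorem of_le {N : ℕ} (hh : NConcaveOn N h (Set.Ici 0)) (hnN : n ≤ N) :
    NConcaveOn n h (Set.Ici 0) := by
  intro A B hA hB hAI hBI l hl
  set S : Matrix (Fin N) (Fin n) ℂ := (1 : Matrix (Fin N) (Fin N) ℂ).submatrix id (Fin.castLE hnN)
  have hS : Sᴴ * S = 1 := conjTranspose_submatrix_one_mul_self (Fin.castLE_injective hnN)
  have pad_spec {X : Matrix (Fin n) (Fin n) ℂ} (hX : X.IsHermitian)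
      (hXI : spectrum ℝ X ⊆ Set.Ici 0) :
      (S * X * Sᴴ).IsHermitian ∧ spectrum ℝ (S * X * Sᴴ) ⊆ Set.Ici 0 :=
    nonneg_iff_isHermitian_and_spectrum_subset_Ici.mp <|
      ((nonneg_iff_isHermitian_and_spectrum_subset_Ici.mpr ⟨hX, hXI⟩).posSemidef
        |>.mul_mul_conjTranspose_same S).nonneg
  have cfc_pad {X : Matrix (Fin n) (Fin n) ℂ} (hX : X.IsHermitian) :
      Sᴴ * cfc h (S * X * Sᴴ) * S = cfc h X :=
    conjTranspose_mul_cfc_mul_of_isometry (isHermitian_mul_mul_conjTranspose S hX) hX hS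
      (by rw [Matrix.mul_assoc, hS, Matrix.mul_one]) h
  obtain ⟨hA', hAI'⟩ := pad_spec hA hAI
  obtain ⟨hB', hBI'⟩ := pad_spec hB hBI
  have hpad : l • (S * A * Sᴴ) + (1 - l) • (S * B * Sᴴ) = S * (l • A + (1 - l) • B) * Sᴴ := by
    simp only [Matrix.mul_add, Matrix.add_mul, Matrix.mul_smul, Matrix.smul_mul]
  have key := (hh _ _ hA' hB' hAI' hBI' l hl).conjTranspose_mul_mul_same S
  rw [hpad, Matrix.mul_sub, Matrix.sub_mul,
    cfc_pad ((hA.smul (.all l)).add (hB.smul (.all (1 - l))))] at key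
  simpa only [Matrix.mul_add, Matrix.add_mul, Matrix.mul_smul, Matrix.smul_mul, cfc_pad hA,
    cfc_pad hB] using key

theorem nMonotoneOn (hh : NConcaveOn n h (Set.Ici 0)) (h_nonneg : ∀ t ∈ Set.Ici 0, 0 ≤ h t) :
    NMonotoneOn n h (Set.Ici 0) := by
  intro A D hA _ hAI _ hAD
  have hA0 : 0 ≤ A := nonneg_iff_isHermitian_and_spectrum_subset_Ici.mpr ⟨hA, hAI⟩
  refine le_of_forall_one_sub_smul_le fun l hl => ?_
  set C := A + l⁻¹ • (D - A)
  have hC0 : 0 ≤ C := add_nonneg hA0 (smul_nonneg (inv_nonneg.mpr hl.1.le) (sub_nonneg.mpr hAD))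
  obtain ⟨hC, hCI⟩ := nonneg_iff_isHermitian_and_spectrum_subset_Ici.mp hC0
  have hD_eq : l • C + (1 - l) • A = D := by
    rw [smul_add, smul_inv_smul₀ hl.1.ne']
    module
  calc (1 - l) • cfc h A ≤ l • cfc h C + (1 - l) • cfc h A :=
        le_add_of_nonneg_left (smul_nonneg hl.1.le (cfc_nonneg_of_nonneg h_nonneg hC0))
    _ ≤ cfc h D := by
        rw [← hD_eq, Matrix.le_iff]
        exact hh C A hC hA hCI hAI l ⟨hl.1.le, hl.2⟩

end NConcaveOn

end ConcaveAndMonotone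

section GeneralizedInverse

open scoped MatrixOrder

variable {𝕜 : Type*} [RCLike 𝕜] {m k p : Type*} [Fintype m]

-- `F'` acts as an inverse of `F` only on the range of `Tᴴ`, so `F` may be singular.
theorem mul_add_conjTranspose_mul_le_of_mul_mul_eq [Finite p] {F F' : Matrix m m 𝕜}
    (hF : 0 ≤ F) (hF' : F'.IsHermitian) {T : Matrix p m 𝕜} (hT : T * F' * F = T)
    (Z : Matrix m p 𝕜) : T * Z + Zᴴ * Tᴴ ≤ Zᴴ * F * Z + T * F' * Tᴴ := by
  have hT' : F * F' * Tᴴ = Tᴴ := by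
    simpa only [conjTranspose_mul, hF.posSemidef.1.eq, hF'.eq, Matrix.mul_assoc] using
      congrArg conjTranspose hT
  have square_nonneg := hF.posSemidef.conjTranspose_mul_mul_same (Z - F' * Tᴴ)
  have square_eq : (Z - F' * Tᴴ)ᴴ * F * (Z - F' * Tᴴ) =
      Zᴴ * F * Z + T * F' * Tᴴ - (T * Z + Zᴴ * Tᴴ) := by
    rw [conjTranspose_sub, conjTranspose_mul, conjTranspose_conjTranspose, hF'.eq,
      Matrix.sub_mul, hT, Matrix.mul_sub, Matrix.sub_mul, Matrix.sub_mul,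
      Matrix.mul_assoc Zᴴ F (F' * Tᴴ), ← Matrix.mul_assoc F, hT', ← Matrix.mul_assoc T]
    abel
  rwa [square_eq, ← Matrix.le_iff] at square_nonneg

theorem mul_mul_conjTranspose_le_of_compression_le [Fintype k] [Finite p] {F F' : Matrix m m 𝕜}
    {M M' : Matrix k k 𝕜} (hF : 0 ≤ F) (hF' : F'.IsHermitian) (hM' : M'.IsHermitian)
    (hM'M : M' * M * M' = M') {T : Matrix p m 𝕜} (hT : T * F' * F = T) {S : Matrix m k 𝕜}
    (hSM : Sᴴ * F * S ≤ M) : T * S * M' * (T * S)ᴴ ≤ T * F' * Tᴴ := by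
  set W : Matrix k p 𝕜 := M' * (T * S)ᴴ
  have hW : Wᴴ = T * S * M' := by rw [conjTranspose_mul, conjTranspose_conjTranspose, hM'.eq]
  have cross_left : T * (S * W) = T * S * M' * (T * S)ᴴ := by simp only [W, Matrix.mul_assoc]
  have cross_right : (S * W)ᴴ * Tᴴ = T * S * M' * (T * S)ᴴ := by
    rw [conjTranspose_mul, hW, Matrix.mul_assoc, ← conjTranspose_mul]
  have quad_le : (S * W)ᴴ * F * (S * W) ≤ T * S * M' * (T * S)ᴴ :=
    calc (S * W)ᴴ * F * (S * W) = Wᴴ * (Sᴴ * F * S) * W := by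
          simp only [conjTranspose_mul, Matrix.mul_assoc]
      _ ≤ Wᴴ * M * W := conjTranspose_mul_mul_mono hSM W
      _ = T * S * (M' * M * M') * (T * S)ᴴ := by simp only [hW, W, Matrix.mul_assoc]
      _ = T * S * M' * (T * S)ᴴ := by rw [hM'M]
  have two_mul_le := (mul_add_conjTranspose_mul_le_of_mul_mul_eq hF hF' hT (S * W)).trans
    (add_le_add_left quad_le _)
  rwa [cross_left, cross_right, add_le_add_iff_left] at two_mul_le

theorem mul_cfc_conjTranspose_mul_self_eq_self [DecidableEq m] [Fintype p] (T : Matrix p m 𝕜)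
    {h : ℝ → ℝ} (hh : ∀ t, 0 < t → h t = 1) : T * cfc h (Tᴴ * T) = T := by
  have hX : 0 ≤ Tᴴ * T := (posSemidef_conjTranspose_mul_self T).nonneg
  have mul_sub_one_eq_zero : ∀ t ∈ spectrum ℝ (Tᴴ * T), t * (h t - 1) = 0 := fun t ht =>
    (spectrum_nonneg_of_nonneg hX ht).eq_or_lt.elim (fun h0 => by rw [← h0, zero_mul])
      fun h0 => by rw [hh t h0, sub_self, mul_zero]
  have gram_mul_eq_zero : Tᴴ * T * (cfc h (Tᴴ * T) - 1) = 0 :=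
    calc Tᴴ * T * (cfc h (Tᴴ * T) - 1) = cfc (fun t => t * (h t - 1)) (Tᴴ * T) := by
          rw [cfc_mul_matrix, cfc_id' ℝ (Tᴴ * T) hX.isSelfAdjoint,
            cfc_sub h (fun _ => 1) (Tᴴ * T) (continuousOn_real_spectrum _ h),
            cfc_const_one ℝ (Tᴴ * T)]
      _ = 0 := by rw [cfc_congr mul_sub_one_eq_zero, cfc_const_zero]
  rwa [conjTranspose_mul_self_mul_eq_zero, Matrix.mul_sub, Matrix.mul_one, sub_eq_zero]
    at gram_mul_eq_zero

end GeneralizedInverse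

section DivisionByConcave

open scoped MatrixOrder

namespace NConcaveOn

variable {n : ℕ} {f : ℝ → ℝ}

theorem cfc_div_compression_le {N : ℕ} (hf : NConcaveOn N f (Set.Ici 0))
    (hf_nonneg : ∀ t ∈ Set.Ici 0, 0 ≤ f t) (hf_ne : ∀ t, 0 < t → f t ≠ 0) {p k : Type*}
    [Fintype p] [DecidableEq p] [Fintype k] [DecidableEq k] (T : Matrix p (Fin N) ℂ)
    {S : Matrix (Fin N) k ℂ} (hS : Sᴴ * S = 1) :
    cfc (fun t => t / f t) (T * S * (T * S)ᴴ) ≤ cfc (fun t => t / f t) (T * Tᴴ) := by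
  set X := Tᴴ * T
  have hX0 : 0 ≤ X := (posSemidef_conjTranspose_mul_self T).nonneg
  obtain ⟨hX, hXI⟩ := nonneg_iff_isHermitian_and_spectrum_subset_Ici.mp hX0
  have hTS : (T * S)ᴴ * (T * S) = Sᴴ * X * S := by
    simp only [X, conjTranspose_mul, Matrix.mul_assoc]
  have hM : cfc (fun t => (f t)⁻¹) (Sᴴ * X * S) * cfc f (Sᴴ * X * S) *
      cfc (fun t => (f t)⁻¹) (Sᴴ * X * S) = cfc (fun t => (f t)⁻¹) (Sᴴ * X * S) := by
    rw [← cfc_mul_matrix, ← cfc_mul_matrix]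
    exact cfc_congr fun t _ => by simpa only [inv_inv] using mul_inv_mul_cancel (f t)⁻¹
  have hT : T * cfc (fun t => (f t)⁻¹) X * cfc f X = T := by
    rw [Matrix.mul_assoc, ← cfc_mul_matrix]
    exact mul_cfc_conjTranspose_mul_self_eq_self T fun t ht => inv_mul_cancel₀ (hf_ne t ht)
  simp only [div_eq_inv_mul, cfc_mul_conjTranspose_self, hTS]
  exact mul_mul_conjTranspose_le_of_compression_le (cfc_nonneg_of_nonneg hf_nonneg hX0)
    (isHermitian_cfc X _) (isHermitian_cfc (Sᴴ * X * S) _) hM hT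
    (hf.conjTranspose_mul_cfc_mul_le hX hXI hS)

theorem cfc_div_le_cfc_div_add_vecMulVec (hf : NConcaveOn (n + 1) f (Set.Ici 0))
    (hf_nonneg : ∀ t ∈ Set.Ici 0, 0 ≤ f t) (hf_ne : ∀ t, 0 < t → f t ≠ 0)
    {A : Matrix (Fin n) (Fin n) ℂ} (hA : 0 ≤ A) (v : Fin n → ℂ) :
    cfc (fun t => t / f t) A ≤ cfc (fun t => t / f t) (A + vecMulVec v (star v)) := by
  obtain ⟨R, rfl⟩ := CStarAlgebra.nonneg_iff_eq_mul_star_self.mp hA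
  set T : Matrix (Fin n) (Fin (n + 1)) ℂ := Matrix.of fun i => Fin.snoc (R i) (v i) with hT
  set S := (1 : Matrix (Fin (n + 1)) (Fin (n + 1)) ℂ).submatrix id Fin.castSucc with hS
  have hTS : T * S = R := by
    ext i j
    simp [hT, hS, Matrix.mul_apply, Matrix.one_apply]
  have hTT : T * Tᴴ = R * Rᴴ + vecMulVec v (star v) := by
    ext i j
    simp [hT, Matrix.mul_apply, Fin.sum_univ_castSucc, vecMulVec_apply]
  have key := hf.cfc_div_compression_le hf_nonneg hf_ne T
    (conjTranspose_submatrix_one_mul_self (Fin.castSucc_injective n))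
  rwa [hTS, hTT] at key

theorem nMonotoneOn_div (hf : NConcaveOn (n + 1) f (Set.Ici 0))
    (hf_nonneg : ∀ t ∈ Set.Ici 0, 0 ≤ f t) (hf_ne : ∀ t, 0 < t → f t ≠ 0) :
    NMonotoneOn n (fun t => t / f t) (Set.Ici 0) := by
  intro A B hA _ hAI _ hAB
  have hA0 : 0 ≤ A := nonneg_iff_isHermitian_and_spectrum_subset_Ici.mpr ⟨hA, hAI⟩
  obtain ⟨r, v, hv⟩ := Matrix.posSemidef_iff_eq_sum_vecMulVec.mp (Matrix.le_iff.mp hAB)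
  rw [← add_sub_cancel A B, hv]
  clear hv
  induction r with
  | zero => simp only [Finset.univ_eq_empty, Finset.sum_empty, add_zero, le_refl]
  | succ r ih =>
    rw [Fin.sum_univ_castSucc, ← add_assoc]
    refine (ih fun i => v i.castSucc).trans
      (hf.cfc_div_le_cfc_div_add_vecMulVec hf_nonneg hf_ne (add_nonneg hA0 ?_) _)
    exact Finset.sum_nonneg fun i _ => (posSemidef_vecMulVec_self_star (v i.castSucc)).nonneg

end NConcaveOn

end DivisionByConcave

section TraceInequality

open scoped MatrixOrder

theorem trace_mul_add_trace_mul_sub_trace_mul_le {𝕜 m : Type*} [RCLike 𝕜] [Fintype m]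
    {F F₁ F₂ G G₁ G₂ : Matrix m m 𝕜} (hF₁ : 0 ≤ F₁) (hG₂ : 0 ≤ G₂) (hF₁F : F₁ ≤ F)
    (hF₂F : F₂ ≤ F) (hG₁G : G₁ ≤ G) (hG₂G : G₂ ≤ G) :
    (F₁ * G₁).trace + (F₂ * G₂).trace - (F * G).trace ≤ (F₁ * G₂).trace := by
  have h₁ := trace_mul_nonneg hF₁ (sub_nonneg.mpr hG₁G)
  have h₂ := trace_mul_nonneg (sub_nonneg.mpr hF₁F) (sub_nonneg.mpr hG₂G)
  have h₃ := trace_mul_nonneg (sub_nonneg.mpr hF₂F) hG₂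
  rw [← sub_nonneg]
  convert add_nonneg (add_nonneg h₁ h₂) h₃ using 1
  simp only [Matrix.mul_sub, Matrix.sub_mul, trace_sub]
  ring

theorem trace_sqrt_cfc_mul_mul_sqrt_cfc {𝕜 m : Type*} [RCLike 𝕜] [Fintype m] [DecidableEq m]
    {f : ℝ → ℝ} (hf_nonneg : ∀ t ∈ Set.Ici 0, 0 ≤ f t) {X : Matrix m m 𝕜} (hX : 0 ≤ X)
    (Y : Matrix m m 𝕜) :
    (cfc (fun t => √(f t)) X * Y * cfc (fun t => √(f t)) X).trace = (cfc f X * Y).trace := by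
  rw [trace_mul_comm, ← Matrix.mul_assoc, ← cfc_mul_matrix]
  congr 2
  exact cfc_congr fun t ht => Real.mul_self_sqrt (hf_nonneg t (spectrum_nonneg_of_nonneg hX ht))

theorem NMonotoneOn.trace_add_trace_sub_trace_abs_le {n : ℕ} {f g : ℝ → ℝ}
    (hf : NMonotoneOn n f (Set.Ici 0)) (hg : NMonotoneOn n g (Set.Ici 0))
    (hf_nonneg : ∀ t ∈ Set.Ici 0, 0 ≤ f t) (hg_nonneg : ∀ t ∈ Set.Ici 0, 0 ≤ g t)
    (hfg : ∀ t ∈ Set.Ici 0, f t * g t = t) {A B : Matrix (Fin n) (Fin n) ℂ} (hA : 0 ≤ A)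
    (hB : 0 ≤ B) :
    A.trace + B.trace - (cfc (fun t : ℝ => |t|) (A - B)).trace ≤
      2 * (cfc f A * cfc g B).trace := by
  set D := B + (A - B)⁺
  have hBD : B ≤ D := le_add_of_nonneg_right (CFC.posPart_nonneg _)
  have hAB : (A - B).IsHermitian := hA.posSemidef.1.sub hB.posSemidef.1
  have hAD : A ≤ D := sub_le_iff_le_add'.mp (CFC.le_posPart hAB)
  have cfc_mul_cfc {X : Matrix (Fin n) (Fin n) ℂ} (hX : 0 ≤ X) : cfc f X * cfc g X = X := by
    rw [← cfc_mul_matrix]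
    exact (cfc_congr fun t ht => hfg t (spectrum_nonneg_of_nonneg hX ht)).trans
      (cfc_id' ℝ X hX.posSemidef.1)
  have key := trace_mul_add_trace_mul_sub_trace_mul_le (cfc_nonneg_of_nonneg hf_nonneg hA)
    (cfc_nonneg_of_nonneg hg_nonneg hB) (hf.cfc_le_cfc hA hAD) (hf.cfc_le_cfc hB hBD)
    (hg.cfc_le_cfc hA hAD) (hg.cfc_le_cfc hB hBD)
  rw [cfc_mul_cfc hA, cfc_mul_cfc hB, cfc_mul_cfc (hB.trans hBD)] at key
  have trace_D : 2 * D.trace = A.trace + B.trace + (cfc (fun t : ℝ => |t|) (A - B)).trace := by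
    have h := congrArg trace (cfc_abs_add_self hAB)
    simp only [two_nsmul, trace_add, trace_sub] at h
    simp only [D, trace_add]
    linear_combination -h
  calc A.trace + B.trace - (cfc (fun t : ℝ => |t|) (A - B)).trace
      = 2 * (A.trace + B.trace - D.trace) := by linear_combination trace_D
    _ ≤ 2 * (cfc f A * cfc g B).trace := mul_le_mul_of_nonneg_left key zero_le_two

theorem generalized_powers_stormer_general
    (n : ℕ) (f : ℝ → ℝ)
    (hconc : NConcaveOn (n + 1) f (Set.Ici 0))
    (hf0 : 0 ≤ f 0)
    (hfpos : ∀ t : ℝ, 0 < t → 0 < f t)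
    (g : ℝ → ℝ)
    (hg : ∀ t : ℝ, 0 < t → g t = t / f t)
    (hg0 : g 0 = 0)
    (A B : Matrix (Fin n) (Fin n) ℂ) (hA : A.PosSemidef) (hB : B.PosSemidef) :
    A.trace + B.trace - (cfc (fun t : ℝ => |t|) (A - B)).trace ≤
      2 * (cfc (fun t => Real.sqrt (f t)) A * cfc g B *
        cfc (fun t => Real.sqrt (f t)) A).trace := by
  have f_nonneg : ∀ t ∈ Set.Ici 0, 0 ≤ f t := fun t ht =>
    (Set.mem_Ici.mp ht).eq_or_lt.elim (fun h => h ▸ hf0) fun h => (hfpos t h).le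
  have f_mono : NMonotoneOn n f (Set.Ici 0) :=
    (hconc.of_le n.le_succ).nMonotoneOn f_nonneg
  have div_mono : NMonotoneOn n (fun t => t / f t) (Set.Ici 0) :=
    hconc.nMonotoneOn_div f_nonneg fun t ht => (hfpos t ht).ne'
  have f_mul_div : ∀ t ∈ Set.Ici 0, f t * (t / f t) = t := fun t ht =>
    (Set.mem_Ici.mp ht).eq_or_lt.elim (fun h => by simp [← h]) fun h =>
      mul_div_cancel₀ t (hfpos t h).ne'
  have g_eq_div : cfc g B = cfc (fun t => t / f t) B := cfc_congr fun t ht =>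
    (spectrum_nonneg_of_nonneg hB.nonneg ht).eq_or_lt.elim (fun h => by simp [← h, hg0]) (hg t)
  rw [g_eq_div, trace_sqrt_cfc_mul_mul_sqrt_cfc f_nonneg hA.nonneg]
  exact f_mono.trace_add_trace_sub_trace_abs_le div_mono f_nonneg
    (fun t ht => div_nonneg ht (f_nonneg t ht)) f_mul_div hA.nonneg hB.nonneg

end TraceInequality

/-- Generalized Powers–Størmer inequality: if `f : [0, ∞) → ℝ` is continuous and
`(n+1)`-concave with `f(0) ≥ 0` and `f(t) > 0` for `t > 0`, and `g(t) = t / f(t)` for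
`t > 0`, `g(0) = 0`, then for all positive semidefinite `A, B ∈ Mₙ(ℂ)`:
`Tr(A) + Tr(B) − Tr(|A − B|) ≤ 2 Tr(f(A)^{1/2} g(B) f(A)^{1/2})`, where
`|A − B| = (√|·|)` is applied via `cfc` and `f(A)^{1/2} = (√f)(A)`. -/
theorem generalized_powers_stormer
    (n : ℕ) (hn : 1 ≤ n) (f : ℝ → ℝ)
    (hfc : ContinuousOn f (Set.Ici 0))
    (hconc : NConcaveOn (n + 1) f (Set.Ici 0))
    (hf0 : 0 ≤ f 0)
    (hfpos : ∀ t : ℝ, 0 < t → 0 < f t)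
    (g : ℝ → ℝ)
    (hg : ∀ t : ℝ, 0 < t → g t = t / f t)
    (hg0 : g 0 = 0)
    (A B : Matrix (Fin n) (Fin n) ℂ) (hA : A.PosSemidef) (hB : B.PosSemidef) :
    A.trace + B.trace - (cfc (fun t : ℝ => |t|) (A - B)).trace ≤
      2 * (cfc (fun t => Real.sqrt (f t)) A * cfc g B *
        cfc (fun t => Real.sqrt (f t)) A).trace :=
  generalized_powers_stormer_general n f hconc hf0 hfpos g hg hg0 A B hA hB
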